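/- arXiv:1708.04403 — 2 statements merged into one kernel-verified Lean document; each statement's English description precedes it below -/
import Mathlib

section
/- Let (Ω, P) be a probability space, y : Ω → {−1,+1} measurable, and let ζ be a real number with 0 ≤ ζ ≤ 1/6. Let i ≥ 1 be an integer, and let h₁⁰, h₁ⁱ and h₂⁰, …, h₂^{i−1} be measurable classifiers Ω → {−1,+1}. Write err(h) = P{ω : h ω ≠ y ω} and d(f,g) = P{ω : f ω ≠ g ω}. Assume: (a) for every k < i, the events {h₁ⁱ ≠ y} and {h₂ᵏ ≠ y} are independent; (b) err(h₂ᵏ) ≤ ζ for every k < i; and (c) err(h₁ⁱ) > err(h₁⁰) / (2·(1 − 2ζ)). Then Σ_{k<i} (d(h₁ⁱ, h₂ᵏ) − err(h₂ᵏ)) > i · err(h₁⁰) / 2. -/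
open MeasureTheory

/-!
If exactly one of two classifiers is wrong at a point, then they disagree there. When their error
events have probabilities `a` and `b` and are not positively correlated, this happens with
probability at least `a + b - 2ab`, so the disagreement exceeds `b` by at least `a(1 - 2b)`. Summing
over `i` classifiers of the second view, whose errors average at most `ζ < 1/2`, gives at least
`i · a(1 - 2ζ)`, and this is more than `i · e/2` as soon as `a > e/(2(1 - 2ζ))`. In co-training,
`e` is the error of the initial classifier `h₁⁰`.
-/

section Disagreement

open Finset
open scoped symmDiff

variable {Ω α : Type*}

/-- The event that two classifiers differ. Labels may come from any type, and taking the true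
labelling for `g` gives the error event of `f`. -/
def disagreementSet (f g : Ω → α) : Set Ω := {ω | f ω ≠ g ω}

lemma symmDiff_disagreementSet_subset (f g y : Ω → α) :
    disagreementSet f y ∆ disagreementSet g y ⊆ disagreementSet f g := by
  rintro ω (⟨hf, hg⟩ | ⟨hg, hf⟩) hfg
  · exact hg fun hgy => hf (hfg.trans hgy)
  · exact hf fun hfy => hg (hfg.symm.trans hfy)

variable [MeasurableSpace Ω] {μ : Measure Ω}

/-- The distance `d(f, g)` between two classifiers: the measure of the event that they differ.
The error rate of `f` is `d(f, y)`, with `y` the true labelling. -/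
noncomputable def disagreement (μ : Measure Ω) (f g : Ω → α) : ℝ := μ.real (disagreementSet f g)

lemma measureReal_inter_eq_mul_of_indepSet {A B : Set Ω}
    (h : ProbabilityTheory.IndepSet A B μ) : μ.real (A ∩ B) = μ.real A * μ.real B := by
  simp only [measureReal_def, h.measure_inter_eq_mul, ENNReal.toReal_mul]

variable [IsFiniteMeasure μ]

lemma measureReal_add_sub_two_mul_inter_le_symmDiff {A : Set Ω} (hA : NullMeasurableSet A μ)
    (B : Set Ω) : μ.real A + μ.real B - 2 * μ.real (A ∩ B) ≤ μ.real (A ∆ B) := by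
  have hunion : μ.real (A ∪ B) + μ.real (A ∩ B) = μ.real A + μ.real B :=
    measureReal_union_add_inter₀' hA
  have hsdiff : μ.real (A ∪ B) - μ.real (A ∩ B) ≤ μ.real (A ∆ B) := by
    rw [symmDiff_eq_sup_sdiff_inf]
    exact le_measureReal_sdiff
  linarith

lemma disagreement_mul_one_sub_two_mul_le {f g y : Ω → α}
    (hf : NullMeasurableSet (disagreementSet f y) μ)
    (hcorr : μ.real (disagreementSet f y ∩ disagreementSet g y) ≤
      disagreement μ f y * disagreement μ g y) :
    disagreement μ f y * (1 - 2 * disagreement μ g y) ≤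
      disagreement μ f g - disagreement μ g y := by
  have hdis : disagreement μ f y + disagreement μ g y
      - 2 * μ.real (disagreementSet f y ∩ disagreementSet g y) ≤ disagreement μ f g :=
    (measureReal_add_sub_two_mul_inter_le_symmDiff hf _).trans
      (measureReal_mono (symmDiff_disagreementSet_subset f g y))
  linarith

theorem stmt4_general {ι : Type*} {s : Finset ι} (hs : s.Nonempty) {f y : Ω → α} {g : ι → Ω → α}
    {ζ e : ℝ} (hζ : ζ < 1 / 2) (hf : NullMeasurableSet (disagreementSet f y) μ)
    (hcorr : ∀ k ∈ s, μ.real (disagreementSet f y ∩ disagreementSet (g k) y) ≤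
      disagreement μ f y * disagreement μ (g k) y)
    (hg : ∑ k ∈ s, disagreement μ (g k) y ≤ #s * ζ)
    (he : e / (2 * (1 - 2 * ζ)) < disagreement μ f y) :
    #s * e / 2 < ∑ k ∈ s, (disagreement μ f (g k) - disagreement μ (g k) y) := by
  have hcard : (0 : ℝ) < #s := by exact_mod_cast hs.card_pos
  have herr : e / 2 < disagreement μ f y * (1 - 2 * ζ) := by
    rw [div_lt_iff₀ (by linarith)] at he
    linarith
  have herr_nonneg : 0 ≤ disagreement μ f y := measureReal_nonneg
  calc #s * e / 2 = #s * (e / 2) := by ring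
    _ < #s * (disagreement μ f y * (1 - 2 * ζ)) := by gcongr
    _ = disagreement μ f y * (#s - 2 * (#s * ζ)) := by ring
    _ ≤ disagreement μ f y * (#s - 2 * ∑ k ∈ s, disagreement μ (g k) y) := by gcongr
    _ = ∑ k ∈ s, disagreement μ f y * (1 - 2 * disagreement μ (g k) y) := by
      rw [← mul_sum, sum_sub_distrib, ← mul_sum, sum_const, nsmul_one]
    _ ≤ ∑ k ∈ s, (disagreement μ f (g k) - disagreement μ (g k) y) :=
      sum_le_sum fun k hk => disagreement_mul_one_sub_two_mul_le hf (hcorr k hk)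

end Disagreement

/-- co-training with conditionally independent views. If the error events of
`h₁ⁱ` and each `h₂ᵏ` (`k < i`) are independent, each `err(h₂ᵏ) ≤ ζ ≤ 1/6`, and
`err(h₁ⁱ) > err(h₁⁰)/(2(1−2ζ))`, then `Σ_{k<i} (d(h₁ⁱ,h₂ᵏ) − err(h₂ᵏ)) > i·err(h₁⁰)/2`. -/
theorem stmt4 {Ω : Type*} [MeasurableSpace Ω] (P : Measure Ω) [IsProbabilityMeasure P]
    (y : Ω → Bool) (hy : Measurable y)
    (ζ : ℝ) (hζ0 : 0 ≤ ζ) (hζ : ζ ≤ 1 / 6)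
    (i : ℕ) (hi : 1 ≤ i)
    (h₁0 h₁i : Ω → Bool) (h₂ : ℕ → Ω → Bool)
    (hm0 : Measurable h₁0) (hmi : Measurable h₁i) (hm2 : ∀ k, Measurable (h₂ k))
    (hind : ∀ k < i,
      ProbabilityTheory.IndepSet {ω | h₁i ω ≠ y ω} {ω | h₂ k ω ≠ y ω} P)
    (herr2 : ∀ k < i, (P {ω | h₂ k ω ≠ y ω}).toReal ≤ ζ)
    (herr1 : (P {ω | h₁i ω ≠ y ω}).toReal >
      (P {ω | h₁0 ω ≠ y ω}).toReal / (2 * (1 - 2 * ζ))) :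
    ∑ k ∈ Finset.range i,
      ((P {ω | h₁i ω ≠ h₂ k ω}).toReal - (P {ω | h₂ k ω ≠ y ω}).toReal)
      > (i : ℝ) * (P {ω | h₁0 ω ≠ y ω}).toReal / 2 := by
  have hsum : ∑ k ∈ Finset.range i, disagreement P (h₂ k) y ≤ (Finset.range i).card * ζ :=
    (Finset.sum_le_card_nsmul _ _ ζ fun k hk => herr2 k (Finset.mem_range.1 hk)).trans_eq
      (nsmul_eq_mul _ _)
  have hbound := stmt4_general (Finset.nonempty_range_iff.2 (by lia)) (hζ.trans_lt (by norm_num))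
    (measurableSet_eq_fun hmi hy).compl.nullMeasurableSet
    (fun k hk => (measureReal_inter_eq_mul_of_indepSet (hind k (Finset.mem_range.1 hk))).le)
    hsum herr1
  rw [Finset.card_range] at hbound
  exact hbound
end

section
/- Let V be a finite type, c : V → {−1,+1}, L : Set V, and let r₁, r₂ : V → V → Prop be relations satisfying the perfect-graph condition: for v = 1, 2, r_v a b → c a = c b. For a relation r and S : Set V define cl_r(S) = {x | ∃ y ∈ S, Relation.ReflTransGen r y x}, and define S : ℕ → Set V by S 0 = L and S (k+1) = cl_{r₁}(S k) ∪ cl_{r₂}(S k). Then: (i) (∃ k, S k = Set.univ) if and only if every x ∈ V satisfies ∃ y ∈ L, Relation.ReflTransGen (fun a b => r₁ a b ∨ r₂ a b) y x; and (ii) for every x ∈ V and every y ∈ L with Relation.ReflTransGen (fun a b => r₁ a b ∨ r₂ a b) y x, one has c x = c y, so every instance reached by the combinative propagation receives its correct label. -/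
/-
A round of propagation never leaves a set that is closed under all the relations, and it absorbs
every edge out of the current set; so the union of the rounds is the closure of `L` under the
combined relation. The rounds increase, so finitely many unlabeled vertices of that closure are all
reached by one common round. Labels are constant along edges, hence along paths.
-/

open Function Relation Set

section CombinativePropagation

variable {V C ι : Type*}

/-- The instances reachable from the set `S` along directed paths of the relation `r`: the result of
running label propagation on one graph to exhaustion. -/
def reachableFrom (r : V → V → Prop) (S : Set V) : Set V :=
  {x | ∃ y ∈ S, ReflTransGen r y x}

/-- One round of combinative label propagation: labels are propagated to exhaustion on each graph
`r i` separately, and the outcomes are pooled. Co-training is the case of two graphs. -/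
def propagate (r : ι → V → V → Prop) (S : Set V) : Set V :=
  ⋃ i, reachableFrom (r i) S

/-- A graph with edge relation `r` is perfect for the true labels `c` if its edges only connect
instances with the same label. -/
def IsPerfect (c : V → C) (r : V → V → Prop) : Prop :=
  ∀ a b, r a b → c a = c b

theorem IsPerfect.exists {c : V → C} {r : ι → V → V → Prop} (hr : ∀ i, IsPerfect c (r i)) :
    IsPerfect c fun a b => ∃ i, r i a b :=
  fun a b ⟨i, hab⟩ => hr i a b hab

theorem IsPerfect.eq_of_reflTransGen {c : V → C} {r : V → V → Prop} (hr : IsPerfect c r) {a b : V}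
    (hab : ReflTransGen r a b) : c a = c b := by
  simpa only [reflTransGen_eq_self] using hab.lift c hr

section Reachability

variable {r : V → V → Prop} {S T : Set V}

theorem subset_reachableFrom (r : V → V → Prop) (S : Set V) : S ⊆ reachableFrom r S :=
  fun x hx => ⟨x, hx, .refl⟩

theorem reachableFrom_subset (hST : S ⊆ T) (hT : ∀ a b, r a b → a ∈ T → b ∈ T) :
    reachableFrom r S ⊆ T := by
  rintro x ⟨y, hy, hyx⟩
  induction hyx with
  | refl => exact hST hy
  | tail _ hab ha => exact hT _ _ hab ha

theorem mem_reachableFrom_of_edge {a b : V} (hab : r a b) (ha : a ∈ reachableFrom r S) :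
    b ∈ reachableFrom r S :=
  let ⟨y, hy, hya⟩ := ha
  ⟨y, hy, hya.tail hab⟩

end Reachability

section Propagation

variable {r : ι → V → V → Prop} {S T : Set V}

theorem propagate_cond (r₁ r₂ : V → V → Prop) (S : Set V) :
    propagate (fun b => cond b r₁ r₂) S = reachableFrom r₁ S ∪ reachableFrom r₂ S :=
  iSup_bool_eq

theorem mem_propagate_of_edge {i : ι} {a b : V} (hab : r i a b) (ha : a ∈ S) :
    b ∈ propagate r S :=
  mem_iUnion_of_mem i ⟨a, ha, .single hab⟩

theorem propagate_subset (hST : S ⊆ T) (hT : ∀ i a b, r i a b → a ∈ T → b ∈ T) :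
    propagate r S ⊆ T :=
  iUnion_subset fun i => reachableFrom_subset hST (hT i)

variable (r)

theorem subset_propagate [Nonempty ι] (S : Set V) : S ⊆ propagate r S :=
  subset_iUnion_of_subset (Classical.arbitrary ι) (subset_reachableFrom _ S)

theorem monotone_iterate_propagate [Nonempty ι] (L : Set V) :
    Monotone fun k => (propagate r)^[k] L :=
  fun _ _ hmn => monotone_iterate_of_id_le (subset_propagate r) hmn L

theorem iterate_propagate_subset_reachableFrom (L : Set V) (k : ℕ) :
    (propagate r)^[k] L ⊆ reachableFrom (fun a b => ∃ i, r i a b) L :=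
  have hmaps : MapsTo (propagate r) (Iic (reachableFrom (fun a b => ∃ i, r i a b) L))
      (Iic (reachableFrom (fun a b => ∃ i, r i a b) L)) := fun _ hS =>
    propagate_subset hS fun i _ _ hab => mem_reachableFrom_of_edge ⟨i, hab⟩
  hmaps.iterate k (subset_reachableFrom _ L)

theorem iUnion_iterate_propagate (L : Set V) :
    ⋃ k, (propagate r)^[k] L = reachableFrom (fun a b => ∃ i, r i a b) L := by
  apply (iUnion_subset (iterate_propagate_subset_reachableFrom r L)).antisymm
  refine reachableFrom_subset (subset_iUnion (fun k => (propagate r)^[k] L) 0) ?_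
  rintro a b ⟨i, hab⟩ ha
  obtain ⟨k, hk⟩ := mem_iUnion.mp ha
  refine mem_iUnion_of_mem (k + 1) ?_
  rw [iterate_succ_apply']
  exact mem_propagate_of_edge hab hk

end Propagation

theorem exists_eq_univ_iff_iUnion_eq_univ_of_directed {S : ι → Set V} (hS : Directed (· ⊆ ·) S)
    {i₀ : ι} (hfin : (S i₀)ᶜ.Finite) : (∃ i, S i = univ) ↔ ⋃ i, S i = univ := by
  refine ⟨fun ⟨i, hi⟩ => univ_subset_iff.mp (hi ▸ subset_iUnion S i), fun hcover => ?_⟩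
  have : Nonempty ι := ⟨i₀⟩
  obtain ⟨i, hi⟩ := hS.exists_mem_subset_of_finset_subset_biUnion
    (s := hfin.toFinset) (by simp only [hcover, subset_univ])
  obtain ⟨j, hi₀j, hij⟩ := hS i₀ i
  rw [hfin.coe_toFinset] at hi
  refine ⟨j, univ_subset_iff.mp ?_⟩
  rw [← union_compl_self (S i₀)]
  exact union_subset hi₀j (hi.trans hij)

theorem exists_iterate_propagate_eq_univ_iff [Nonempty ι] (r : ι → V → V → Prop) {L : Set V}
    (hL : Lᶜ.Finite) :
    (∃ k, (propagate r)^[k] L = univ) ↔ reachableFrom (fun a b => ∃ i, r i a b) L = univ := by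
  rw [← iUnion_iterate_propagate]
  exact exists_eq_univ_iff_iUnion_eq_univ_of_directed
    (monotone_iterate_propagate r L).directed_le (i₀ := 0) hL

theorem stmt9_general [Nonempty ι] (c : V → C) (L : Set V) (hL : Lᶜ.Finite)
    (r : ι → V → V → Prop) (hp : ∀ i, IsPerfect c (r i))
    (S : ℕ → Set V) (hS0 : S 0 = L) (hSsucc : ∀ k, S (k + 1) = propagate r (S k)) :
    ((∃ k, S k = univ) ↔ ∀ x : V, ∃ y ∈ L, ReflTransGen (fun a b => ∃ i, r i a b) y x)
    ∧ ∀ x : V, ∀ y ∈ L, ReflTransGen (fun a b => ∃ i, r i a b) y x → c x = c y := by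
  have hS (k : ℕ) : S k = (propagate r)^[k] L := by
    induction k with
    | zero => exact hS0
    | succ k ih => rw [hSsucc, ih, iterate_succ_apply']
  refine ⟨?_, fun _ _ _ hyx => ((IsPerfect.exists hp).eq_of_reflTransGen hyx).symm⟩
  simp only [hS]
  exact (exists_iterate_propagate_eq_univ_iff r hL).trans eq_univ_iff_forall

end CombinativePropagation

/-- co-training with perfect graphs. The combinative label propagation
covers all of `V` iff every vertex is reachable from `L` in the combined graph; and
with perfect graphs every vertex reached by combined propagation receives its correct
label. -/
theorem stmt9 {V : Type*} [Fintype V] (c : V → Bool) (L : Set V)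
    (r₁ r₂ : V → V → Prop)
    (hp₁ : ∀ a b, r₁ a b → c a = c b) (hp₂ : ∀ a b, r₂ a b → c a = c b)
    (S : ℕ → Set V) (hS0 : S 0 = L)
    (hSsucc : ∀ k, S (k + 1) =
      {x | ∃ y ∈ S k, Relation.ReflTransGen r₁ y x} ∪
      {x | ∃ y ∈ S k, Relation.ReflTransGen r₂ y x}) :
    ((∃ k, S k = Set.univ) ↔
      ∀ x : V, ∃ y ∈ L, Relation.ReflTransGen (fun a b => r₁ a b ∨ r₂ a b) y x)
    ∧ ∀ x : V, ∀ y ∈ L,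
        Relation.ReflTransGen (fun a b => r₁ a b ∨ r₂ a b) y x → c x = c y := by
  simpa [Bool.exists_bool, or_comm] using
    stmt9_general c L (toFinite Lᶜ) (fun b => cond b r₁ r₂) (Bool.forall_bool.mpr ⟨hp₂, hp₁⟩) S hS0
      fun k => (hSsucc k).trans (propagate_cond r₁ r₂ (S k)).symm
end
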